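/- Let Φ ∈ ℝ^{m×n} have restricted isometry constant δ_{K+1} < 1/(√K + 1), let x ∈ ℝ^n be K-sparse with support T, |T| = K, and let y = Φx + v with v ≠ 0. Suppose a run of OMP has selected only correct indices in its first k iterations (1 ≤ k < K), i.e., T^k ⊆ T with |T^k| = k. If √SNR > 2√K(1 + δ_{K+1}) / ((1 − (√K + 1)δ_{K+1}) · √MAR), then the run also selects a correct index at iteration k+1, i.e., t^{k+1} ∈ T. -/

import Mathlib

noncomputable section
open Finset

/-- `Vec n` is `ℝ^n` with the Euclidean (ℓ²) norm. -/
abbrev Vec (n : ℕ) := EuclideanSpace ℝ (Fin n)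

/-- The standard inner product `⟨u, v⟩ = ∑ i, u i * v i`. -/
def dot {n : ℕ} (u v : Vec n) : ℝ := ∑ i, u i * v i

/-- The `j`-th column of a matrix, as a Euclidean vector. -/
def col {m n : ℕ} (Φ : Matrix (Fin m) (Fin n) ℝ) (j : Fin n) : Vec m :=
  WithLp.toLp 2 fun i => Φ i j

/-- Matrix-vector multiplication `Φ x`, valued in Euclidean space. -/
def mulVec' {m n : ℕ} (Φ : Matrix (Fin m) (Fin n) ℝ) (x : Vec n) : Vec m :=
  WithLp.toLp 2 fun i => ∑ j, Φ i j * x j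

/-- The support of a vector, as a `Finset`. -/
def suppF {n : ℕ} (x : Vec n) : Finset (Fin n) :=
  Finset.univ.filter fun i => x i ≠ 0

/-- Restriction of a vector to an index set (zero outside the set). -/
def restrict {n : ℕ} (x : Vec n) (S : Finset (Fin n)) : Vec n :=
  WithLp.toLp 2 fun i => if i ∈ S then x i else 0

/-- `RIPConst Φ L δ` : δ is the restricted isometry constant of `Φ` of order `L`,
i.e. the smallest `c ≥ 0` such that `(1-c)‖u‖² ≤ ‖Φu‖² ≤ (1+c)‖u‖²` for all
`L`-sparse `u`. -/
def RIPConst {m n : ℕ} (Φ : Matrix (Fin m) (Fin n) ℝ) (L : ℕ) (δ : ℝ) : Prop :=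
  IsLeast {c : ℝ | 0 ≤ c ∧ ∀ u : Vec n, (suppF u).card ≤ L →
    (1 - c) * ‖u‖ ^ 2 ≤ ‖mulVec' Φ u‖ ^ 2 ∧ ‖mulVec' Φ u‖ ^ 2 ≤ (1 + c) * ‖u‖ ^ 2} δ

/-- Signal-to-noise ratio `‖Φx‖²/‖v‖²`. -/
def SNR {m n : ℕ} (Φ : Matrix (Fin m) (Fin n) ℝ) (x : Vec n) (v : Vec m) : ℝ :=
  ‖mulVec' Φ x‖ ^ 2 / ‖v‖ ^ 2

/-- A run of `N` iterations of Orthogonal Matching Pursuit on data `(Φ, y)`: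
`idx (k+1) = t^{k+1}` is the index selected at iteration `k+1`, `sets k = T^k`,
`est k = x^k` and `res k = r^k`. -/
structure OMPRun {m n : ℕ} (Φ : Matrix (Fin m) (Fin n) ℝ) (y : Vec m) (N : ℕ) where
  idx : ℕ → Fin n
  sets : ℕ → Finset (Fin n)
  est : ℕ → Vec n
  res : ℕ → Vec m
  sets_zero : sets 0 = ∅
  est_zero : est 0 = 0
  res_zero : res 0 = y
  idx_not_mem : ∀ k < N, idx (k + 1) ∉ sets k
  idx_max : ∀ k < N, ∀ i : Fin n, i ∉ sets k →
    |dot (col Φ i) (res k)| ≤ |dot (col Φ (idx (k + 1))) (res k)|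
  sets_succ : ∀ k < N, sets (k + 1) = insert (idx (k + 1)) (sets k)
  est_supp : ∀ k < N, suppF (est (k + 1)) ⊆ sets (k + 1)
  est_min : ∀ k < N, ∀ u : Vec n, suppF u ⊆ sets (k + 1) →
    ‖y - mulVec' Φ (est (k + 1))‖ ≤ ‖y - mulVec' Φ u‖
  res_succ : ∀ k < N, res (k + 1) = y - mulVec' Φ (est (k + 1))

/-- The vector `Φᵀ w` restricted to an index set `A` (the vector of correlations
`⟨φ_i, w⟩` for `i ∈ A`, zero outside `A`), as a Euclidean vector. -/
def colDots {m n : ℕ} (Φ : Matrix (Fin m) (Fin n) ℝ) (A : Finset (Fin n)) (w : Vec m) : Vec n :=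
  WithLp.toLp 2 fun i => if i ∈ A then dot (col Φ i) w else 0

/-- The vector `Φᵀ w` of all column correlations, as a plain function (so `‖·‖`
is the sup/ℓ∞ norm). -/
def dualVec {m n : ℕ} (Φ : Matrix (Fin m) (Fin n) ℝ) (w : Vec m) : Fin n → ℝ :=
  fun i => dot (col Φ i) w

/-- `P⊥_S w` : the projection of `w` onto the orthogonal complement of the span
of the columns of `Φ` indexed by `S`. -/
def perpProj {m n : ℕ} (Φ : Matrix (Fin m) (Fin n) ℝ) (S : Finset (Fin n)) (w : Vec m) : Vec m :=
  w - (Submodule.orthogonalProjectionOnto (Submodule.span ℝ (col Φ '' (S : Set (Fin n)))) w : Vec m)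

/-- The `j`-th largest value (1-indexed) among `{|x i| : i ∈ Γ}` (with
multiplicities); `0` if `j > |Γ|` or `j = 0`. -/
def kthLargest {n : ℕ} (x : Vec n) (Γ : Finset (Fin n)) (j : ℕ) : ℝ :=
  if 1 ≤ j ∧ j ≤ Γ.card then
    (Multiset.sort (Γ.val.map fun i => |x i|) (· ≤ ·)).getD (Γ.card - j) 0
  else 0

/-! Put `z = x - x^k` and `S = T^k`. Then `r^k = Φz + v`, the columns in `S` are orthogonal to
`r^k`, and `z` agrees with `x` on `T \ S`. Let `M` be the largest correlation `|⟨φ_i, r^k⟩|` with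
`i ∉ S`. Only the `N = |T \ S|` columns indexed by `T \ S` contribute to `⟨Φz, r^k⟩`, so by
Cauchy–Schwarz `(1 - δ)‖z‖ - √(1 + δ)‖v‖ ≤ √N M`. If `M` were attained at some `j ∉ T`, the
near-orthogonality of `φ_j` and `Φz` would give `M ≤ δ‖z‖ + √(1 + δ)‖v‖`, and together
`(1 - (√N + 1)δ)‖z‖ ≤ (√N + 1)√(1 + δ)‖v‖`. Since `‖z‖ ≥ √N min_{i ∈ T \ S} |x_i|`, this is
impossible when the noise is small compared with the remaining entries of `x`. The passage from the
SNR to this comparison is the bound `‖Φx‖ ≤ √(1 + δ)‖x‖`. -/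

section Vec

open scoped InnerProductSpace

variable {m n : ℕ}

lemma dot_eq_inner (u w : Vec n) : dot u w = ⟪u, w⟫_ℝ := by
  simp only [dot, PiLp.inner_apply, RCLike.inner_apply, conj_trivial, mul_comm]

lemma mulVec'_eq_toEuclideanLin (Φ : Matrix (Fin m) (Fin n) ℝ) (u : Vec n) :
    mulVec' Φ u = Matrix.toEuclideanLin Φ u :=
  rfl

lemma mulVec'_add (Φ : Matrix (Fin m) (Fin n) ℝ) (u w : Vec n) :
    mulVec' Φ (u + w) = mulVec' Φ u + mulVec' Φ w := by
  simp only [mulVec'_eq_toEuclideanLin, map_add]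

lemma mulVec'_sub (Φ : Matrix (Fin m) (Fin n) ℝ) (u w : Vec n) :
    mulVec' Φ (u - w) = mulVec' Φ u - mulVec' Φ w := by
  simp only [mulVec'_eq_toEuclideanLin, map_sub]

lemma mulVec'_smul (Φ : Matrix (Fin m) (Fin n) ℝ) (c : ℝ) (u : Vec n) :
    mulVec' Φ (c • u) = c • mulVec' Φ u := by
  simp only [mulVec'_eq_toEuclideanLin, map_smul]

lemma mulVec'_single (Φ : Matrix (Fin m) (Fin n) ℝ) (j : Fin n) (c : ℝ) :
    mulVec' Φ (EuclideanSpace.single j c) = c • col Φ j := by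
  ext i
  simp [mulVec', col, mul_comm]

lemma inner_mulVec'_eq_sum (Φ : Matrix (Fin m) (Fin n) ℝ) (z : Vec n) (w : Vec m) :
    ⟪mulVec' Φ z, w⟫_ℝ = ∑ i, z i * dot (col Φ i) w := by
  simp only [← dot_eq_inner, dot, mulVec', col, sum_mul, mul_sum]
  rw [sum_comm]
  exact sum_congr rfl fun i _ => sum_congr rfl fun j _ => by ring

lemma mem_suppF {u : Vec n} {i : Fin n} : i ∈ suppF u ↔ u i ≠ 0 := by
  simp [suppF]

lemma suppF_subset_iff {u : Vec n} {S : Finset (Fin n)} : suppF u ⊆ S ↔ ∀ i ∉ S, u i = 0 := by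
  simp only [subset_iff, mem_suppF, not_imp_comm]

lemma suppF_add_subset (u w : Vec n) : suppF (u + w) ⊆ suppF u ∪ suppF w := by
  simp only [suppF_subset_iff, mem_union, mem_suppF]
  simp +contextual

lemma suppF_sub_subset (u w : Vec n) : suppF (u - w) ⊆ suppF u ∪ suppF w := by
  simp only [suppF_subset_iff, mem_union, mem_suppF]
  simp +contextual

lemma suppF_smul_subset (c : ℝ) (u : Vec n) : suppF (c • u) ⊆ suppF u := by
  simp +contextual [suppF_subset_iff, mem_suppF]

lemma suppF_single_subset (j : Fin n) (c : ℝ) : suppF (EuclideanSpace.single j c) ⊆ {j} := by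
  rw [suppF_subset_iff]
  simp +contextual

lemma inner_eq_zero_of_disjoint_suppF {u w : Vec n} (h : Disjoint (suppF u) (suppF w)) :
    ⟪u, w⟫_ℝ = 0 := by
  rw [← dot_eq_inner, dot]
  refine sum_eq_zero fun i _ => mul_eq_zero.2 (or_iff_not_imp_left.2 fun hi => ?_)
  exact not_not.1 (mem_suppF.not.1 (disjoint_left.1 h (mem_suppF.2 hi)))

lemma sum_sq_le_norm_sq (z : Vec n) (U : Finset (Fin n)) : ∑ i ∈ U, z i ^ 2 ≤ ‖z‖ ^ 2 := by
  rw [EuclideanSpace.real_norm_sq_eq]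
  exact sum_le_univ_sum_of_nonneg fun i => sq_nonneg (z i)

lemma sqrt_card_mul_le_norm {z : Vec n} {U : Finset (Fin n)} {μ : ℝ} (hμ : 0 ≤ μ)
    (h : ∀ i ∈ U, μ ≤ |z i|) : √(#U : ℝ) * μ ≤ ‖z‖ := by
  refine le_of_sq_le_sq ?_ (norm_nonneg z)
  calc (√(#U : ℝ) * μ) ^ 2 = #U • μ ^ 2 := by
        rw [mul_pow, Real.sq_sqrt (Nat.cast_nonneg _), nsmul_eq_mul]
    _ ≤ ∑ i ∈ U, z i ^ 2 := card_nsmul_le_sum _ _ _ fun i hi => by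
        rw [← sq_abs (z i)]
        exact pow_le_pow_left₀ hμ (h i hi) 2
    _ ≤ ‖z‖ ^ 2 := sum_sq_le_norm_sq z U

lemma inner_mulVec'_le_of_abs_dot_col_le {Φ : Matrix (Fin m) (Fin n) ℝ} {z : Vec n} {w : Vec m}
    {U : Finset (Fin n)} {M : ℝ} (hU : ∀ i ∉ U, z i * dot (col Φ i) w = 0) (hM₀ : 0 ≤ M)
    (hM : ∀ i ∈ U, |dot (col Φ i) w| ≤ M) : ⟪mulVec' Φ z, w⟫_ℝ ≤ ‖z‖ * (√(#U : ℝ) * M) := by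
  have hz : √(∑ i ∈ U, z i ^ 2) ≤ ‖z‖ :=
    Real.sqrt_le_iff.2 ⟨norm_nonneg z, sum_sq_le_norm_sq z U⟩
  have hdot : √(∑ i ∈ U, dot (col Φ i) w ^ 2) ≤ √(#U : ℝ) * M := by
    rw [← Real.sqrt_sq hM₀, ← Real.sqrt_mul (Nat.cast_nonneg _), ← nsmul_eq_mul]
    exact Real.sqrt_le_sqrt <| sum_le_card_nsmul _ _ _ fun i hi =>
      sq_le_sq' (neg_le_of_abs_le (hM i hi)) (le_of_abs_le (hM i hi))
  calc ⟪mulVec' Φ z, w⟫_ℝ = ∑ i ∈ U, z i * dot (col Φ i) w := by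
        rw [inner_mulVec'_eq_sum, sum_subset (subset_univ U) fun i _ => hU i]
    _ ≤ √(∑ i ∈ U, z i ^ 2) * √(∑ i ∈ U, dot (col Φ i) w ^ 2) := Real.sum_mul_le_sqrt_mul_sqrt ..
    _ ≤ ‖z‖ * (√(#U : ℝ) * M) := by gcongr

end Vec

lemma inner_eq_zero_of_forall_norm_le_norm_sub_smul {E : Type*} [NormedAddCommGroup E]
    [InnerProductSpace ℝ E] {a r : E} (h : ∀ t : ℝ, ‖r‖ ≤ ‖r - t • a‖) : inner ℝ a r = 0 := by
  have hmin : ‖r - 0‖ = ⨅ w : Submodule.span ℝ {a}, ‖r - w‖ := by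
    refine le_antisymm (le_ciInf fun ⟨w, hw⟩ => ?_)
      (ciInf_le ⟨0, Set.forall_mem_range.2 fun _ => norm_nonneg _⟩ (0 : Submodule.span ℝ {a}))
    obtain ⟨t, rfl⟩ := Submodule.mem_span_singleton.1 hw
    simpa only [sub_zero] using h t
  have horth := (Submodule.norm_eq_iInf_iff_real_inner_eq_zero _ (zero_mem _)).1 hmin a
    (Submodule.mem_span_singleton_self a)
  rwa [sub_zero, real_inner_comm] at horth

lemma add_one_mul_lt_of_two_mul_lt {s b δ c t : ℝ} (hs : 1 ≤ s) (hsb : s ≤ b) (hδ : 0 ≤ δ)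
    (hc : 0 ≤ c) (ht : 0 ≤ t) (h : 2 * c < (1 - (b + 1) * δ) * t) :
    (s + 1) * c < s * (1 - (s + 1) * δ) * t := by
  calc (s + 1) * c ≤ s * (2 * c) := by linarith [mul_le_mul_of_nonneg_right hs hc]
    _ < s * ((1 - (b + 1) * δ) * t) := by gcongr
    _ ≤ s * ((1 - (s + 1) * δ) * t) := by gcongr
    _ = s * (1 - (s + 1) * δ) * t := by ring

/-- `c` is a restricted isometry bound of `Φ` of order `L`: one of the constants of which
`RIPConst Φ L` is the least. `Φ` enters every estimate through the two inequalities of such a bound,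
which are kept as separate fields. -/
structure IsRIPBound {m n : ℕ} (Φ : Matrix (Fin m) (Fin n) ℝ) (L : ℕ) (c : ℝ) : Prop where
  nonneg : 0 ≤ c
  lower : ∀ u : Vec n, #(suppF u) ≤ L → (1 - c) * ‖u‖ ^ 2 ≤ ‖mulVec' Φ u‖ ^ 2
  upper : ∀ u : Vec n, #(suppF u) ≤ L → ‖mulVec' Φ u‖ ^ 2 ≤ (1 + c) * ‖u‖ ^ 2

lemma RIPConst.isRIPBound {m n L : ℕ} {Φ : Matrix (Fin m) (Fin n) ℝ} {δ : ℝ}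
    (h : RIPConst Φ L δ) : IsRIPBound Φ L δ :=
  ⟨h.1.1, fun u hu => (h.1.2 u hu).1, fun u hu => (h.1.2 u hu).2⟩

namespace IsRIPBound

open scoped InnerProductSpace

variable {m n L : ℕ} {Φ : Matrix (Fin m) (Fin n) ℝ} {δ : ℝ}

lemma norm_mulVec'_le (h : IsRIPBound Φ L δ) {u : Vec n} (hu : #(suppF u) ≤ L) :
    ‖mulVec' Φ u‖ ≤ √(1 + δ) * ‖u‖ := by
  refine le_of_sq_le_sq ?_ (by positivity)
  rw [mul_pow, Real.sq_sqrt (by linarith [h.nonneg])]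
  exact h.upper u hu

lemma norm_col_le (h : IsRIPBound Φ L δ) (hL : 1 ≤ L) (j : Fin n) : ‖col Φ j‖ ≤ √(1 + δ) := by
  have hcard : #(suppF (EuclideanSpace.single j (1 : ℝ))) ≤ L :=
    (card_le_card (suppF_single_subset j 1)).trans (by simpa using hL)
  simpa [mulVec'_single] using h.norm_mulVec'_le hcard

lemma two_mul_inner_mulVec'_le (h : IsRIPBound Φ L δ) {u w : Vec n}
    (hL : #(suppF u ∪ suppF w) ≤ L) (hdisj : Disjoint (suppF u) (suppF w)) :
    2 * ⟪mulVec' Φ u, mulVec' Φ w⟫_ℝ ≤ δ * (‖u‖ ^ 2 + ‖w‖ ^ 2) := by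
  have hinner := inner_eq_zero_of_disjoint_suppF hdisj
  have hadd := h.upper (u + w) ((card_le_card (suppF_add_subset u w)).trans hL)
  have hsub := h.lower (u - w) ((card_le_card (suppF_sub_subset u w)).trans hL)
  rw [mulVec'_add, norm_add_sq_real, norm_add_sq_real, hinner] at hadd
  rw [mulVec'_sub, norm_sub_sq_real, norm_sub_sq_real, hinner] at hsub
  linarith

lemma inner_mulVec'_le (h : IsRIPBound Φ L δ) {u w : Vec n} (hL : #(suppF u ∪ suppF w) ≤ L)
    (hdisj : Disjoint (suppF u) (suppF w)) :
    ⟪mulVec' Φ u, mulVec' Φ w⟫_ℝ ≤ δ * (‖u‖ * ‖w‖) := by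
  obtain rfl | hu := eq_or_ne u 0
  · simp [mulVec'_eq_toEuclideanLin]
  obtain rfl | hw := eq_or_ne w 0
  · simp [mulVec'_eq_toEuclideanLin]
  -- Rescaling both vectors to norm `‖u‖ * ‖w‖` turns the arithmetic mean into the geometric one.
  have hscaled := h.two_mul_inner_mulVec'_le (u := ‖w‖ • u) (w := ‖u‖ • w)
    ((card_le_card (union_subset_union (suppF_smul_subset _ u) (suppF_smul_subset _ w))).trans hL)
    (hdisj.mono (suppF_smul_subset _ u) (suppF_smul_subset _ w))
  simp only [mulVec'_smul, real_inner_smul_left, real_inner_smul_right, norm_smul,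
    norm_norm] at hscaled
  have hpos : 0 < ‖u‖ * ‖w‖ := mul_pos (norm_pos_iff.2 hu) (norm_pos_iff.2 hw)
  refine le_of_mul_le_mul_left ?_ hpos
  linarith

lemma abs_inner_mulVec'_le (h : IsRIPBound Φ L δ) {u w : Vec n} (hL : #(suppF u ∪ suppF w) ≤ L)
    (hdisj : Disjoint (suppF u) (suppF w)) :
    |⟪mulVec' Φ u, mulVec' Φ w⟫_ℝ| ≤ δ * (‖u‖ * ‖w‖) := by
  have hneg : suppF ((-1 : ℝ) • u) ⊆ suppF u := suppF_smul_subset (-1) u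
  have hflip := h.inner_mulVec'_le ((card_le_card (union_subset_union_left hneg)).trans hL)
    (hdisj.mono_left hneg)
  rw [mulVec'_smul, neg_one_smul, neg_one_smul, inner_neg_left, norm_neg] at hflip
  exact abs_le'.2 ⟨h.inner_mulVec'_le hL hdisj, hflip⟩

lemma abs_dot_col_le (h : IsRIPBound Φ L δ) {z : Vec n} {j : Fin n} (hz : #(suppF z) + 1 ≤ L)
    (hj : j ∉ suppF z) (v : Vec m) :
    |dot (col Φ j) (mulVec' Φ z + v)| ≤ δ * ‖z‖ + √(1 + δ) * ‖v‖ := by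
  have hsingle := suppF_single_subset j (1 : ℝ)
  have hcard : #(suppF (EuclideanSpace.single j (1 : ℝ)) ∪ suppF z) ≤ L :=
    (card_le_card (union_subset_union_left hsingle)).trans <|
      (card_union_le _ _).trans (by rwa [card_singleton, add_comm])
  have hsignal : |⟪col Φ j, mulVec' Φ z⟫_ℝ| ≤ δ * ‖z‖ := by
    simpa [mulVec'_single] using h.abs_inner_mulVec'_le hcard
      ((disjoint_singleton_left.2 hj).mono_left hsingle)
  have hnoise : |⟪col Φ j, v⟫_ℝ| ≤ √(1 + δ) * ‖v‖ :=
    (abs_real_inner_le_norm _ _).trans (by gcongr; exact h.norm_col_le (by omega) j)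
  rw [dot_eq_inner, inner_add_right]
  exact (abs_add_le _ _).trans (add_le_add hsignal hnoise)

lemma norm_mul_le_inner_mulVec'_add (h : IsRIPBound Φ L δ) {z : Vec n} (hz : #(suppF z) ≤ L)
    (v : Vec m) :
    ‖z‖ * ((1 - δ) * ‖z‖ - √(1 + δ) * ‖v‖) ≤ ⟪mulVec' Φ z, mulVec' Φ z + v⟫_ℝ := by
  have hnoise : -(√(1 + δ) * ‖z‖ * ‖v‖) ≤ ⟪mulVec' Φ z, v⟫_ℝ := by
    refine neg_le_of_abs_le ((abs_real_inner_le_norm _ _).trans ?_)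
    gcongr
    exact h.norm_mulVec'_le hz
  rw [inner_add_right, real_inner_self_eq_norm_sq]
  linarith [h.lower z hz]

lemma norm_sub_le_sqrt_card_mul_of_abs_dot_col_le (h : IsRIPBound Φ L δ) {z : Vec n}
    (hz : #(suppF z) ≤ L) {v : Vec m}
    {U : Finset (Fin n)} {M : ℝ} (hU : ∀ i ∉ U, z i * dot (col Φ i) (mulVec' Φ z + v) = 0)
    (hM₀ : 0 ≤ M) (hM : ∀ i ∈ U, |dot (col Φ i) (mulVec' Φ z + v)| ≤ M) :
    (1 - δ) * ‖z‖ - √(1 + δ) * ‖v‖ ≤ √(#U : ℝ) * M := by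
  obtain hz₀ | hz₀ := (norm_nonneg z).eq_or_lt
  · rw [← hz₀, mul_zero, zero_sub]
    exact (neg_nonpos.2 (by positivity)).trans (by positivity)
  · exact le_of_mul_le_mul_left ((h.norm_mul_le_inner_mulVec'_add hz v).trans
      (inner_mulVec'_le_of_abs_dot_col_le hU hM₀ hM)) hz₀

lemma two_mul_noise_lt_mul_sqrt_of_lt_sqrt_SNR (h : IsRIPBound Φ L δ) {x : Vec n}
    (hx : #(suppF x) ≤ L) (hx₀ : x ≠ 0) {v : Vec m} (hv : v ≠ 0) {K a D : ℝ} (hK : 0 < K)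
    (ha : 0 < a) (hD : 0 < D)
    (hSNR : 2 * √K * (1 + δ) / (D * √(a / (‖x‖ ^ 2 / K))) < √(SNR Φ x v)) :
    2 * (√(1 + δ) * ‖v‖) < D * √a := by
  have hx_pos : 0 < ‖x‖ := norm_pos_iff.2 hx₀
  have hv_pos : 0 < ‖v‖ := norm_pos_iff.2 hv
  have hδ := h.nonneg
  have hSNR_eq : √(SNR Φ x v) = ‖mulVec' Φ x‖ / ‖v‖ := by
    rw [SNR, ← div_pow, Real.sqrt_sq (by positivity)]
  have hMAR_eq : √(a / (‖x‖ ^ 2 / K)) = √a / (‖x‖ / √K) := by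
    rw [Real.sqrt_div ha.le, Real.sqrt_div (by positivity), Real.sqrt_sq hx_pos.le]
  have hthreshold_eq : 2 * √K * (1 + δ) / (D * (√a / (‖x‖ / √K))) =
      √(1 + δ) * ‖x‖ * (2 * √(1 + δ)) / (D * √a) := by
    rw [← Real.sq_sqrt (show 0 ≤ 1 + δ by positivity), Real.sqrt_sq (Real.sqrt_nonneg _)]
    field_simp
  have hlt : √(1 + δ) * ‖x‖ * (2 * √(1 + δ)) / (D * √a) < √(1 + δ) * ‖x‖ / ‖v‖ := by
    rw [← hthreshold_eq, ← hMAR_eq]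
    refine hSNR.trans_le (hSNR_eq.trans_le ?_)
    gcongr
    exact h.norm_mulVec'_le hx
  rw [div_lt_div_iff₀ (by positivity) hv_pos, mul_assoc (√(1 + δ) * ‖x‖)] at hlt
  simpa only [mul_assoc] using lt_of_mul_lt_mul_left hlt (by positivity)

lemma two_mul_noise_lt_mul_abs_of_lt_sqrt_SNR {x : Vec n} {v : Vec m} {T : Finset (Fin n)}
    (h : IsRIPBound Φ (#T + 1) δ) (hTne : T.Nonempty) (hsupp : suppF x = T)
    (hδ : δ < 1 / (√(#T : ℝ) + 1)) (hv : v ≠ 0)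
    (hSNR : 2 * √(#T : ℝ) * (1 + δ) / ((1 - (√(#T : ℝ) + 1) * δ) *
      √((T.inf' hTne fun j => |x j| ^ 2) / (‖x‖ ^ 2 / #T))) < √(SNR Φ x v))
    {j : Fin n} (hj : j ∈ T) : 2 * (√(1 + δ) * ‖v‖) < (1 - (√(#T : ℝ) + 1) * δ) * |x j| := by
  have hx_ne : ∀ i ∈ T, x i ≠ 0 := fun i hi => mem_suppF.1 (hsupp ▸ hi)
  have hx₀ : x ≠ 0 := fun hx => hx_ne j hj (by simp [hx])
  have hmin_pos : 0 < T.inf' hTne fun j => |x j| ^ 2 :=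
    (lt_inf'_iff hTne).2 fun i hi => pow_pos (abs_pos.2 (hx_ne i hi)) 2
  have hgap : 0 < 1 - (√(#T : ℝ) + 1) * δ := by
    rw [lt_div_iff₀' (by positivity)] at hδ
    exact sub_pos.2 hδ
  refine (h.two_mul_noise_lt_mul_sqrt_of_lt_sqrt_SNR (hsupp ▸ Nat.le_succ _) hx₀ hv
    (Nat.cast_pos.2 hTne.card_pos) hmin_pos hgap hSNR).trans_le ?_
  gcongr
  exact Real.sqrt_le_iff.2 ⟨abs_nonneg _, inf'_le (fun j => |x j| ^ 2) hj⟩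

lemma noise_lt_mul_abs_of_lt_sqrt_SNR {x : Vec n} {v : Vec m} {T U : Finset (Fin n)}
    (h : IsRIPBound Φ (#T + 1) δ) (hTne : T.Nonempty) (hsupp : suppF x = T)
    (hδ : δ < 1 / (√(#T : ℝ) + 1)) (hv : v ≠ 0)
    (hSNR : 2 * √(#T : ℝ) * (1 + δ) / ((1 - (√(#T : ℝ) + 1) * δ) *
      √((T.inf' hTne fun j => |x j| ^ 2) / (‖x‖ ^ 2 / #T))) < √(SNR Φ x v))
    (hU : U ⊆ T) {j : Fin n} (hj : j ∈ U) :
    (√(#U : ℝ) + 1) * (√(1 + δ) * ‖v‖) < √(#U : ℝ) * (1 - (√(#U : ℝ) + 1) * δ) * |x j| := by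
  have hone_le : 1 ≤ √(#U : ℝ) := Real.one_le_sqrt.2 (Nat.one_le_cast.2 (card_pos.2 ⟨j, hj⟩))
  have hsqrt_le : √(#U : ℝ) ≤ √(#T : ℝ) := Real.sqrt_le_sqrt (Nat.cast_le.2 (card_le_card hU))
  exact add_one_mul_lt_of_two_mul_lt hone_le hsqrt_le h.nonneg (by positivity) (abs_nonneg _)
    (h.two_mul_noise_lt_mul_abs_of_lt_sqrt_SNR hTne hsupp hδ hv hSNR (hU hj))

end IsRIPBound

namespace OMPRun

variable {m n N k : ℕ} {Φ : Matrix (Fin m) (Fin n) ℝ} {y : Vec m}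

lemma res_eq (run : OMPRun Φ y N) (hk : k ≤ N) : run.res k = y - mulVec' Φ (run.est k) := by
  cases k with
  | zero => simp [run.res_zero, run.est_zero, mulVec'_eq_toEuclideanLin]
  | succ k => exact run.res_succ k hk

lemma suppF_est_subset (run : OMPRun Φ y N) (hk : k ≤ N) : suppF (run.est k) ⊆ run.sets k := by
  cases k with
  | zero => simp [run.est_zero, suppF]
  | succ k => exact run.est_supp k hk

lemma norm_res_le (run : OMPRun Φ y N) (hk : k ≤ N) {u : Vec n} (hu : suppF u ⊆ run.sets k) :
    ‖run.res k‖ ≤ ‖y - mulVec' Φ u‖ := by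
  cases k with
  | zero =>
    obtain rfl : u = 0 := by
      ext i
      exact suppF_subset_iff.1 hu i (by simp [run.sets_zero])
    simp [run.res_zero, mulVec'_eq_toEuclideanLin]
  | succ k => exact (run.res_succ k hk).symm ▸ run.est_min k hk u hu

lemma dot_col_res_eq_zero (run : OMPRun Φ y N) (hk : k ≤ N) {i : Fin n} (hi : i ∈ run.sets k) :
    dot (col Φ i) (run.res k) = 0 := by
  rw [dot_eq_inner]
  refine inner_eq_zero_of_forall_norm_le_norm_sub_smul fun t => ?_
  have hsupp : suppF (run.est k + EuclideanSpace.single i t) ⊆ run.sets k :=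
    (suppF_add_subset _ _).trans <| union_subset (run.suppF_est_subset hk) <|
      (suppF_single_subset i t).trans (singleton_subset_iff.2 hi)
  have hmin := run.norm_res_le hk hsupp
  rwa [mulVec'_add, mulVec'_single, ← sub_sub, ← run.res_eq hk] at hmin

lemma idx_succ_mem_of_lt_norm_sub_est {x : Vec n} {v : Vec m} {δ : ℝ} {T : Finset (Fin n)}
    (run : OMPRun Φ y N) (hk : k < N) (hx : suppF x ⊆ T) (hy : y = mulVec' Φ x + v)
    (hRIP : IsRIPBound Φ (#T + 1) δ) (hsub : run.sets k ⊆ T)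
    (hnoise : (√(#(T \ run.sets k) : ℝ) + 1) * (√(1 + δ) * ‖v‖) <
      (1 - (√(#(T \ run.sets k) : ℝ) + 1) * δ) * ‖x - run.est k‖) :
    run.idx (k + 1) ∈ T := by
  subst hy
  by_contra hidx
  set z := x - run.est k
  have hzT : suppF z ⊆ T := (suppF_sub_subset _ _).trans
    (union_subset hx ((run.suppF_est_subset hk.le).trans hsub))
  have hz_card : #(suppF z) ≤ #T := card_le_card hzT
  have hres : run.res k = mulVec' Φ z + v := by
    rw [run.res_eq hk.le, mulVec'_sub]
    abel
  have hoff : ∀ i ∉ T \ run.sets k, z i * dot (col Φ i) (mulVec' Φ z + v) = 0 := by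
    intro i hi
    by_cases hiS : i ∈ run.sets k
    · rw [← hres, run.dot_col_res_eq_zero hk.le hiS, mul_zero]
    · rw [suppF_subset_iff.1 hzT i fun hiT => hi (mem_sdiff.2 ⟨hiT, hiS⟩), zero_mul]
  have hmax : ∀ i ∈ T \ run.sets k, |dot (col Φ i) (mulVec' Φ z + v)| ≤
      |dot (col Φ (run.idx (k + 1))) (mulVec' Φ z + v)| := fun i hi => by
    simpa only [hres] using run.idx_max k hk i (mem_sdiff.1 hi).2
  have hlower := hRIP.norm_sub_le_sqrt_card_mul_of_abs_dot_col_le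
    (hz_card.trans (Nat.le_succ _)) hoff (abs_nonneg _) hmax
  have hupper := hRIP.abs_dot_col_le (Nat.succ_le_succ hz_card) (fun hj => hidx (hzT hj)) v
  linarith [mul_le_mul_of_nonneg_left hupper (Real.sqrt_nonneg (#(T \ run.sets k) : ℝ))]

end OMPRun

theorem stmt14_general {m n N k : ℕ} {Φ : Matrix (Fin m) (Fin n) ℝ} {δ : ℝ} {x : Vec n}
    {v y : Vec m} {T : Finset (Fin n)} (hx : suppF x ⊆ T) (hRIP : IsRIPBound Φ (#T + 1) δ)
    (hy : y = mulVec' Φ x + v) (run : OMPRun Φ y N) (hk : k < N) (hsub : run.sets k ⊂ T)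
    (hnoise : ∀ j ∈ T \ run.sets k, (√(#(T \ run.sets k) : ℝ) + 1) * (√(1 + δ) * ‖v‖) <
      √(#(T \ run.sets k) : ℝ) * (1 - (√(#(T \ run.sets k) : ℝ) + 1) * δ) * |x j|) :
    run.idx (k + 1) ∈ T := by
  refine run.idx_succ_mem_of_lt_norm_sub_est hk hx hy hRIP hsub.subset ?_
  obtain ⟨j, hj, hmin⟩ := exists_min_image (T \ run.sets k) (fun i => |x i|)
    (sdiff_nonempty.2 hsub.not_subset)
  set s := √(#(T \ run.sets k) : ℝ)
  have herror : s * |x j| ≤ ‖x - run.est k‖ :=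
    sqrt_card_mul_le_norm (abs_nonneg _) fun i hi => by
      have hest := suppF_subset_iff.1 (run.suppF_est_subset hk.le) i (mem_sdiff.1 hi).2
      simpa [hest] using hmin i hi
  have hgap : 0 < 1 - (s + 1) * δ := by
    have hpos : 0 < (1 - (s + 1) * δ) * (s * |x j|) :=
      (show 0 ≤ (s + 1) * (√(1 + δ) * ‖v‖) by positivity).trans_lt
        ((hnoise j hj).trans_eq (by ring))
    exact pos_of_mul_pos_left hpos (by positivity)
  calc (s + 1) * (√(1 + δ) * ‖v‖) < (1 - (s + 1) * δ) * (s * |x j|) :=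
        (hnoise j hj).trans_eq (by ring)
    _ ≤ (1 - (s + 1) * δ) * ‖x - run.est k‖ := by gcongr

/-- induction step: under the SNR condition, if the first `k`
iterations of OMP selected only correct indices, then so does iteration `k+1`. -/
theorem stmt14 {m n K k : ℕ} (Φ : Matrix (Fin m) (Fin n) ℝ) (δ : ℝ)
    (x : Vec n) (v y : Vec m) (T : Finset (Fin n)) (hTne : T.Nonempty)
    (hsupp : suppF x = T) (hcard : T.card = K)
    (hRIP : RIPConst Φ (K + 1) δ) (hδ : δ < 1 / (Real.sqrt K + 1))
    (hv : v ≠ 0) (hy : y = mulVec' Φ x + v)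
    (hk1 : 1 ≤ k) (hkK : k < K)
    (run : OMPRun Φ y (k + 1))
    (hsub : run.sets k ⊆ T) (hcardk : (run.sets k).card = k)
    (hSNR : Real.sqrt (SNR Φ x v) >
      2 * Real.sqrt K * (1 + δ) /
        ((1 - (Real.sqrt K + 1) * δ) *
          Real.sqrt ((T.inf' hTne fun j => |x j| ^ 2) / (‖x‖ ^ 2 / K)))) :
    run.idx (k + 1) ∈ T := by
  subst hcard
  exact stmt14_general hsupp.le hRIP.isRIPBound hy run k.lt_succ_self
    (hsub.ssubset_of_ne fun h => hkK.ne (hcardk ▸ congrArg card h)) fun _ hj =>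
      hRIP.isRIPBound.noise_lt_mul_abs_of_lt_sqrt_SNR hTne hsupp hδ hv hSNR sdiff_subset hj

end
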